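/- Let L, N be a lightlike frame along the unit-speed spacelike curve γ̂ and fix u ∈ I. A point x ∈ ℝ³₁ satisfies ⟨x − γ̂(u), x − γ̂(u)⟩ = 0 and ⟨x − γ̂(u), e(u)⟩ = 0 if and only if there exists v ∈ ℝ such that x = γ̂(u) + v L(u) or x = γ̂(u) + v N(u). (Hence the discriminant set of G(u,x) = ⟨x − γ̂(u), x − γ̂(u)⟩ equals the union of the discriminant sets of H_L and H_N, i.e. the union of the images of the osculating and transversal lightlike surfaces.) -/

import Mathlib

open scoped Topology

noncomputable section

/-- Points/vectors of Lorentz–Minkowski 3-space `ℝ³₁`. -/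
abbrev R3 : Type := Fin 3 → ℝ

/-- The Lorentz–Minkowski scalar product `⟨x,y⟩ = -x₀y₀ + x₁y₁ + x₂y₂`. -/
def mink (x y : R3) : ℝ := -(x 0 * y 0) + x 1 * y 1 + x 2 * y 2

/-- `(L, N)` is a lightlike frame along the unit-speed spacelike curve `γ` on `I`:
`γ, L, N` are smooth on `I`, `⟨e,e⟩ = 1` (with `e = γ'`), `⟨e,L⟩ = ⟨e,N⟩ = 0`,
`⟨L,L⟩ = ⟨N,N⟩ = 0` and `⟨L,N⟩ = 1` on `I`. -/
structure LightlikeFrame (I : Set ℝ) (γ L N : ℝ → R3) : Prop where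
  smooth_gamma : ContDiffOn ℝ (⊤ : ℕ∞) γ I
  smooth_L : ContDiffOn ℝ (⊤ : ℕ∞) L I
  smooth_N : ContDiffOn ℝ (⊤ : ℕ∞) N I
  unit_speed : ∀ u ∈ I, mink (deriv γ u) (deriv γ u) = 1
  eL : ∀ u ∈ I, mink (deriv γ u) (L u) = 0
  eN : ∀ u ∈ I, mink (deriv γ u) (N u) = 0
  LL : ∀ u ∈ I, mink (L u) (L u) = 0
  NN : ∀ u ∈ I, mink (N u) (N u) = 0
  LN : ∀ u ∈ I, mink (L u) (N u) = 1

/-- `α_L = ⟨γ'', L⟩`. -/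
def alphaL (γ L : ℝ → R3) (u : ℝ) : ℝ := mink (deriv (deriv γ) u) (L u)

/-- `α_N = ⟨γ'', N⟩`. -/
def alphaN (γ N : ℝ → R3) (u : ℝ) : ℝ := mink (deriv (deriv γ) u) (N u)

/-- `α_G = ⟨L, N'⟩`. -/
def alphaG (L N : ℝ → R3) (u : ℝ) : ℝ := mink (L u) (deriv N u)

/-- `σ_L = α_L' + α_L α_G`. -/
def sigmaL (γ L N : ℝ → R3) (u : ℝ) : ℝ :=
  deriv (alphaL γ L) u + alphaL γ L u * alphaG L N u

/-- `σ_N = α_N' - α_N α_G`. -/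
def sigmaN (γ L N : ℝ → R3) (u : ℝ) : ℝ :=
  deriv (alphaN γ N) u - alphaN γ N u * alphaG L N u

theorem mink_comm (x y : R3) : mink x y = mink y x := by
  unfold mink; ring

theorem mink_add_right (x y z : R3) : mink x (y + z) = mink x y + mink x z := by
  simp only [mink, Pi.add_apply]; ring

theorem mink_smul_left (c : ℝ) (x y : R3) : mink (c • x) y = c * mink x y := by
  simp only [mink, Pi.smul_apply, smul_eq_mul]; ring

theorem mink_smul_right (c : ℝ) (x y : R3) : mink x (c • y) = c * mink x y := by
  rw [mink_comm, mink_smul_left, mink_comm]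

/-- Expansion of a vector in a pseudo-orthonormal basis `e, l, n` with `l, n` lightlike. -/
theorem eq_sum_of_lightlike_basis {e l n : R3} (hee : mink e e = 1) (hel : mink e l = 0)
    (hen : mink e n = 0) (hll : mink l l = 0) (hnn : mink n n = 0) (hln : mink l n = 1)
    (w : R3) : w = mink w e • e + mink w n • l + mink w l • n := by
  let M : Matrix (Fin 3) (Fin 3) ℝ := Matrix.of ![e, l, n]
  let P : Matrix (Fin 3) (Fin 3) ℝ := !![-e 0, -n 0, -l 0; e 1, n 1, l 1; e 2, n 2, l 2]
  have hMP : M * P = 1 := by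
    simp only [mink] at hee hel hen hll hnn hln
    ext i j
    fin_cases i <;> fin_cases j <;>
      simp [M, P, Matrix.mul_apply, Fin.sum_univ_three] <;> linarith
  have hPM : P * M = 1 := mul_eq_one_comm.mp hMP
  have hw : Matrix.vecMul w (P * M) = w := by rw [hPM, Matrix.vecMul_one]
  ext j
  rw [← congrFun hw j]
  simp [M, P, mink, Matrix.vecMul, dotProduct, Matrix.mul_apply, Fin.sum_univ_three]
  ring

/-- `x` satisfies `⟨x - γ̂(u), x - γ̂(u)⟩ = 0` and `⟨x - γ̂(u), e(u)⟩ = 0`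
iff `x = γ̂(u) + v L(u)` or `x = γ̂(u) + v N(u)` for some `v ∈ ℝ`. -/
theorem discriminant_of_G (a b : ℝ) (γ L N : ℝ → R3)
    (hframe : LightlikeFrame (Set.Ioo a b) γ L N) :
    ∀ u ∈ Set.Ioo a b, ∀ x : R3,
      ((mink (x - γ u) (x - γ u) = 0 ∧ mink (x - γ u) (deriv γ u) = 0) ↔
        ∃ v : ℝ, x = γ u + v • L u ∨ x = γ u + v • N u) := by
  intro u hu x
  have hLL := hframe.LL u hu
  have hNN := hframe.NN u hu
  have hLe : mink (L u) (deriv γ u) = 0 := by rw [mink_comm, hframe.eL u hu]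
  have hNe : mink (N u) (deriv γ u) = 0 := by rw [mink_comm, hframe.eN u hu]
  constructor
  · rintro ⟨hw, hwe⟩
    have hexp := eq_sum_of_lightlike_basis (hframe.unit_speed u hu) (hframe.eL u hu)
      (hframe.eN u hu) hLL hNN (hframe.LN u hu) (x - γ u)
    rw [hwe, zero_smul, zero_add] at hexp
    have hprod : mink (x - γ u) (N u) * mink (x - γ u) (L u) = 0 := by
      have hsq := congrArg (mink (x - γ u)) hexp
      rw [hw, mink_add_right, mink_smul_right, mink_smul_right] at hsq
      linarith
    rcases mul_eq_zero.mp hprod with h | h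
    · rw [h, zero_smul, zero_add] at hexp
      exact ⟨_, Or.inr (sub_eq_iff_eq_add'.mp hexp)⟩
    · rw [h, zero_smul, add_zero] at hexp
      exact ⟨_, Or.inl (sub_eq_iff_eq_add'.mp hexp)⟩
  · rintro ⟨v, rfl | rfl⟩ <;>
      simp [mink_smul_left, mink_smul_right, hLL, hNN, hLe, hNe]
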